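/- Let N ≥ 1 and let α : Fin N × Fin N → ℝ be a constant matrix. On the polynomial algebra A = ℝ[x₁,…,x_N], define for each k ≥ 0 the bilinear map B_k(f,g) = ∑_{i,j : Fin k → Fin N} (∏_{r} α(i_r, j_r)) · (∂_{i₁}⋯∂_{i_k} f) · (∂_{j₁}⋯∂_{j_k} g), where ∂_s denotes partial derivative with respect to x_s. Then the Moyal-type product f ⋆ g = ∑_{k≥0} (ħ^k / k!) B_k(f,g) on A⟦ħ⟧ is associative: for every n ≥ 0 and all f,g,h ∈ A, ∑_{a+b=n} (1/(a! b!)) B_a(B_b(f,g), h) = ∑_{a+b=n} (1/(a! b!)) B_a(f, B_b(g,h)). -/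

import Mathlib

open Finset MvPolynomial

/-- Iterated partial derivative `∂_{i₁} ⋯ ∂_{i_k} f` of a polynomial in `N` variables
(partial derivatives commute, so the order is irrelevant). -/
noncomputable def iterDeriv {N kk : ℕ} (i : Fin kk → Fin N)
    (f : MvPolynomial (Fin N) ℝ) : MvPolynomial (Fin N) ℝ :=
  (List.ofFn i).foldl (fun p s => pderiv s p) f

/-- The `k`-th coefficient of the Moyal-type product associated to a constant matrix `α`:
`B_k(f,g) = ∑_{i,j : Fin k → Fin N} (∏_r α(i_r, j_r)) · (∂_{i₁}⋯∂_{i_k} f)·(∂_{j₁}⋯∂_{j_k} g)`,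
with `B₀(f,g) = f·g`. -/
noncomputable def moyalB {N : ℕ} (α : Fin N × Fin N → ℝ) (kk : ℕ)
    (f g : MvPolynomial (Fin N) ℝ) : MvPolynomial (Fin N) ℝ :=
  ∑ i : Fin kk → Fin N, ∑ j : Fin kk → Fin N,
    (∏ r : Fin kk, α (i r, j r)) • (iterDeriv i f * iterDeriv j g)

/-!
On `A ⊗ A` put `P = ∑ α(s,t) ∂ₛ ⊗ ∂ₜ`, so that `B_k = μ ∘ P ^ k` with `μ` the multiplication. On
`A ⊗ A ⊗ A` let `P_pq` be the same operator acting in the tensor factors `p` and `q`. The Leibniz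
rule reads `∂ₛ ∘ μ = μ ∘ (∂ₛ ⊗ 1 + 1 ⊗ ∂ₛ)`, whence
`P ∘ (μ ⊗ 1) = (μ ⊗ 1) ∘ (P_02 + P_12)` and `P ∘ (1 ⊗ μ) = (1 ⊗ μ) ∘ (P_01 + P_02)`. As the `P_pq`
commute, the binomial theorem turns both sides of associativity into the triple product applied to
`(P_01 + P_02 + P_12) ^ n (f ⊗ g ⊗ h)`.
-/

open scoped TensorProduct

section Contraction

variable {K R S ι : Type*} [CommSemiring K] [Semiring R] [Algebra K R] [Semiring S] [Algebra K S]
  [Fintype ι]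

/-- The contraction `∑ α(s,t) xₛ yₜ` of two families of elements of an algebra with a matrix of
scalars, indexed by pairs as in `moyalB`. -/
def contraction (α : ι × ι → K) (x y : ι → R) : R :=
  ∑ s, ∑ t, α (s, t) • (x s * y t)

variable (α : ι × ι → K)

lemma contraction_add_left (x x' y : ι → R) :
    contraction α (x + x') y = contraction α x y + contraction α x' y := by
  simp only [contraction, Pi.add_apply, add_mul, smul_add, sum_add_distrib]

lemma contraction_add_right (x y y' : ι → R) :
    contraction α x (y + y') = contraction α x y + contraction α x y' := by
  simp only [contraction, Pi.add_apply, mul_add, smul_add, sum_add_distrib]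

lemma map_contraction (φ : R →ₐ[K] S) (x y : ι → R) :
    φ (contraction α x y) = contraction α (φ ∘ x) (φ ∘ y) := by
  simp only [contraction, map_sum, map_smul, map_mul, Function.comp_apply]

variable {α} in
lemma commute_contraction_right {z : R} {x y : ι → R} (hx : ∀ s, Commute z (x s))
    (hy : ∀ t, Commute z (y t)) : Commute z (contraction α x y) :=
  Commute.sum_right _ _ _ fun s _ => Commute.sum_right _ _ _ fun t _ =>
    ((hx s).mul_right (hy t)).smul_right (α (s, t))

lemma contraction_comp_of_intertwines {V W : Type*} [AddCommMonoid V] [Module K V]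
    [AddCommMonoid W] [Module K W] (φ : V →ₗ[K] W) {x y : ι → Module.End K V}
    {x' y' : ι → Module.End K W} (hx : ∀ s, x' s ∘ₗ φ = φ ∘ₗ x s)
    (hy : ∀ t, y' t ∘ₗ φ = φ ∘ₗ y t) :
    contraction α x' y' ∘ₗ φ = φ ∘ₗ contraction α x y := by
  ext v
  have hxy (s t : ι) : x' s (y' t (φ v)) = φ (x s (y t v)) :=
    (congrArg (x' s) (LinearMap.congr_fun (hy t) v)).trans (LinearMap.congr_fun (hx s) (y t v))
  simp only [contraction, LinearMap.comp_apply, LinearMap.sum_apply, LinearMap.smul_apply,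
    Module.End.mul_apply, hxy, map_sum, map_smul]

end Contraction

section Legs

variable {K M ι : Type*} [CommSemiring K] [AddCommMonoid M] [Module K M] [Fintype ι]

/-- The operator `∑ α(s,t) Eₛ ⊗ Eₜ` on `M ⊗ M`. -/
noncomputable def bidiffOp (α : ι × ι → K) (E : ι → Module.End K M) : Module.End K (M ⊗[K] M) :=
  contraction α (fun s => (E s).rTensor M) (fun t => (E t).lTensor M)

lemma bidiffOp_tmul (α : ι × ι → K) (E : ι → Module.End K M) (x y : M) :
    bidiffOp α E (x ⊗ₜ y) = ∑ s, ∑ t, α (s, t) • (E s x ⊗ₜ[K] E t y) := by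
  simp only [bidiffOp, contraction, LinearMap.sum_apply, LinearMap.smul_apply,
    Module.End.mul_apply, LinearMap.lTensor_tmul, LinearMap.rTensor_tmul]

variable (K M) in
/-- The action of endomorphisms of `M` in the tensor factor `p` of `M ⊗ M ⊗ M`. -/
noncomputable def legHom : Fin 3 → Module.End K M →ₐ[K] Module.End K (M ⊗[K] M ⊗[K] M) :=
  ![(Module.End.rTensorAlgHom K (M ⊗[K] M) M).comp (Module.End.rTensorAlgHom K M M),
    (Module.End.rTensorAlgHom K (M ⊗[K] M) M).comp (Module.End.lTensorAlgHom K M M),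
    Module.End.lTensorAlgHom K M (M ⊗[K] M)]

@[simp]
lemma legHom_zero_tmul (u : Module.End K M) (x y z : M) :
    legHom K M 0 u (x ⊗ₜ y ⊗ₜ z) = u x ⊗ₜ y ⊗ₜ z := rfl

@[simp]
lemma legHom_one_tmul (u : Module.End K M) (x y z : M) :
    legHom K M 1 u (x ⊗ₜ y ⊗ₜ z) = x ⊗ₜ u y ⊗ₜ z := rfl

@[simp]
lemma legHom_two_tmul (u : Module.End K M) (x y z : M) :
    legHom K M 2 u (x ⊗ₜ y ⊗ₜ z) = x ⊗ₜ y ⊗ₜ u z := rfl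

lemma commute_legHom {u v : Module.End K M} (huv : Commute u v) (p q : Fin 3) :
    Commute (legHom K M p u) (legHom K M q v) := by
  obtain rfl | hpq := eq_or_ne p q
  · exact huv.map (legHom K M p)
  · apply TensorProduct.ext_threefold
    intro x y z
    fin_cases p <;> fin_cases q <;> first | exact absurd rfl hpq | rfl

/-- The operator `∑ α(s,t) Eₛ ⊗ Eₜ` acting in the tensor factors `p` and `q` of `M ⊗ M ⊗ M`. -/
noncomputable def bidiffOpOn (α : ι × ι → K) (E : ι → Module.End K M) (p q : Fin 3) :
    Module.End K (M ⊗[K] M ⊗[K] M) :=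
  contraction α (legHom K M p ∘ E) (legHom K M q ∘ E)

variable (α : ι × ι → K) {E : ι → Module.End K M}

lemma commute_bidiffOpOn (hE : ∀ s t, Commute (E s) (E t)) (p q p' q' : Fin 3) :
    Commute (bidiffOpOn α E p q) (bidiffOpOn α E p' q') := by
  have commute_leg (r : Fin 3) (s : ι) : Commute (bidiffOpOn α E p q) (legHom K M r (E s)) :=
    (commute_contraction_right (fun t => commute_legHom (hE s t) r p)
      fun t => commute_legHom (hE s t) r q).symm
  exact commute_contraction_right (commute_leg p') (commute_leg q')

variable (E)

lemma rTensor_bidiffOp : (bidiffOp α E).rTensor M = bidiffOpOn α E 0 1 :=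
  map_contraction α (Module.End.rTensorAlgHom K (M ⊗[K] M) M) _ _

lemma lTensor_bidiffOp_comp_assoc :
    (bidiffOp α E).lTensor M ∘ₗ (TensorProduct.assoc K M M M).toLinearMap =
      (TensorProduct.assoc K M M M).toLinearMap ∘ₗ bidiffOpOn α E 1 2 := by
  have lTensor_bidiffOp : (bidiffOp α E).lTensor M =
      contraction α (fun s => ((E s).rTensor M).lTensor M) fun t => ((E t).lTensor M).lTensor M :=
    map_contraction α (Module.End.lTensorAlgHom K (M ⊗[K] M) M) _ _
  rw [lTensor_bidiffOp]
  refine contraction_comp_of_intertwines α _ (fun s => ?_) fun t => ?_ <;>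
    exact TensorProduct.ext_threefold fun x y z => rfl

end Legs

section Moyal

open LinearMap (mul')

variable {K A ι : Type*} [CommSemiring K] [NonUnitalNonAssocSemiring A] [Module K A]
  [SMulCommClass K A A] [IsScalarTower K A A] [Fintype ι] (α : ι × ι → K)
  (E : ι → Module.End K A)

/-- The `k`-th Moyal coefficient `B_k = μ ∘ (∑ α(s,t) Eₛ ⊗ Eₜ) ^ k`, as a bilinear map, of a family
of operators on an algebra; `moyalB` is the case of the partial derivatives. -/
noncomputable def moyalCoeff (k : ℕ) : A →ₗ[K] A →ₗ[K] A :=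
  TensorProduct.curry (mul' K A ∘ₗ bidiffOp α E ^ k)

lemma moyalCoeff_apply (k : ℕ) (f g : A) :
    moyalCoeff α E k f g = mul' K A ((bidiffOp α E ^ k) (f ⊗ₜ g)) := rfl

lemma moyalCoeff_zero (f g : A) : moyalCoeff α E 0 f g = f * g := by
  rw [moyalCoeff_apply, pow_zero, Module.End.one_apply, LinearMap.mul'_apply]

lemma moyalCoeff_succ (k : ℕ) (f g : A) :
    moyalCoeff α E (k + 1) f g = ∑ s, ∑ t, α (s, t) • moyalCoeff α E k (E s f) (E t g) := by
  simp only [moyalCoeff_apply, pow_succ, Module.End.mul_apply, bidiffOp_tmul, map_sum, map_smul]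

variable {E} in
lemma bidiffOp_comp_mul'_rTensor (leibniz : ∀ s f g, E s (f * g) = E s f * g + f * E s g) :
    bidiffOp α E ∘ₗ (mul' K A).rTensor A =
      (mul' K A).rTensor A ∘ₗ (bidiffOpOn α E 0 2 + bidiffOpOn α E 1 2) := by
  simp only [bidiffOpOn, ← contraction_add_left]
  refine contraction_comp_of_intertwines α _ (fun s => ?_) fun t => ?_ <;>
    refine TensorProduct.ext_threefold fun f g h => ?_
  · simp [leibniz, TensorProduct.add_tmul]
  · simp

variable {E} in
lemma bidiffOp_comp_mul'_lTensor (leibniz : ∀ s f g, E s (f * g) = E s f * g + f * E s g) :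
    bidiffOp α E ∘ₗ ((mul' K A).lTensor A ∘ₗ (TensorProduct.assoc K A A A).toLinearMap) =
      ((mul' K A).lTensor A ∘ₗ (TensorProduct.assoc K A A A).toLinearMap) ∘ₗ
        (bidiffOpOn α E 0 1 + bidiffOpOn α E 0 2) := by
  simp only [bidiffOpOn, ← contraction_add_right]
  refine contraction_comp_of_intertwines α _ (fun s => ?_) fun t => ?_ <;>
    refine TensorProduct.ext_threefold fun f g h => ?_
  · simp
  · simp [leibniz, TensorProduct.tmul_add]

variable (K A) in
/-- The triple product `f ⊗ g ⊗ h ↦ fgh`. -/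
noncomputable def tripleMul : A ⊗[K] A ⊗[K] A →ₗ[K] A :=
  mul' K A ∘ₗ (mul' K A).rTensor A

variable {E} in
lemma moyalCoeff_moyalCoeff_left (leibniz : ∀ s f g, E s (f * g) = E s f * g + f * E s g)
    (a b : ℕ) (f g h : A) :
    moyalCoeff α E a (moyalCoeff α E b f g) h =
      tripleMul K A (((bidiffOpOn α E 0 2 + bidiffOpOn α E 1 2) ^ a * bidiffOpOn α E 0 1 ^ b)
        (f ⊗ₜ g ⊗ₜ h)) := by
  have inner : moyalCoeff α E b f g ⊗ₜ[K] h =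
      (mul' K A).rTensor A ((bidiffOpOn α E 0 1 ^ b) (f ⊗ₜ g ⊗ₜ h)) := by
    rw [← rTensor_bidiffOp, LinearMap.rTensor_pow]
    rfl
  have outer := Module.End.commute_pow_left_of_commute (bidiffOp_comp_mul'_rTensor α leibniz) a
  rw [moyalCoeff_apply, inner, ← LinearMap.comp_apply (_ ^ a), outer]
  rfl

end Moyal

section Associative

open LinearMap (mul')

variable {K A ι : Type*} [CommSemiring K] [NonUnitalSemiring A] [Module K A]
  [SMulCommClass K A A] [IsScalarTower K A A] [Fintype ι]

lemma mul'_comp_lTensor_comp_assoc :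
    mul' K A ∘ₗ (mul' K A).lTensor A ∘ₗ (TensorProduct.assoc K A A A).toLinearMap =
      tripleMul K A :=
  TensorProduct.ext_threefold fun f g h => by simp [tripleMul, mul_assoc]

variable (α : ι × ι → K) {E : ι → Module.End K A}

lemma moyalCoeff_moyalCoeff_right (leibniz : ∀ s f g, E s (f * g) = E s f * g + f * E s g)
    (a b : ℕ) (f g h : A) :
    moyalCoeff α E a f (moyalCoeff α E b g h) =
      tripleMul K A (((bidiffOpOn α E 0 1 + bidiffOpOn α E 0 2) ^ a * bidiffOpOn α E 1 2 ^ b)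
        (f ⊗ₜ g ⊗ₜ h)) := by
  have inner : f ⊗ₜ[K] moyalCoeff α E b g h =
      ((mul' K A).lTensor A ∘ₗ (TensorProduct.assoc K A A A).toLinearMap)
        ((bidiffOpOn α E 1 2 ^ b) (f ⊗ₜ g ⊗ₜ h)) := by
    rw [← LinearMap.comp_apply, LinearMap.comp_assoc, ← Module.End.commute_pow_left_of_commute
      (lTensor_bidiffOp_comp_assoc α E), LinearMap.lTensor_pow]
    rfl
  have outer := Module.End.commute_pow_left_of_commute (bidiffOp_comp_mul'_lTensor α leibniz) a
  rw [moyalCoeff_apply, inner, ← LinearMap.comp_apply (_ ^ a), outer,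
    ← mul'_comp_lTensor_comp_assoc]
  rfl

theorem sum_choose_smul_moyalCoeff_assoc (hE : ∀ s t, Commute (E s) (E t))
    (leibniz : ∀ s f g, E s (f * g) = E s f * g + f * E s g) (n : ℕ) (f g h : A) :
    ∑ p ∈ antidiagonal n, n.choose p.1 • moyalCoeff α E p.1 (moyalCoeff α E p.2 f g) h =
      ∑ p ∈ antidiagonal n, n.choose p.1 • moyalCoeff α E p.1 f (moyalCoeff α E p.2 g h) := by
  let P := bidiffOpOn α E
  have commute_P (p q p' q' : Fin 3) : Commute (P p q) (P p' q') :=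
    commute_bidiffOpOn α hE p q p' q'
  calc
    _ = tripleMul K A (((P 0 2 + P 1 2 + P 0 1) ^ n) (f ⊗ₜ g ⊗ₜ h)) := by
      rw [((commute_P 0 2 0 1).add_left (commute_P 1 2 0 1)).add_pow']
      simp only [moyalCoeff_moyalCoeff_left α leibniz, ← Nat.cast_smul_eq_nsmul K,
        LinearMap.sum_apply, LinearMap.smul_apply, map_sum, map_smul, P]
    _ = tripleMul K A (((P 0 1 + P 0 2 + P 1 2) ^ n) (f ⊗ₜ g ⊗ₜ h)) := by
      rw [add_right_comm, add_comm (P 0 2)]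
    _ = _ := by
      rw [((commute_P 0 1 1 2).add_left (commute_P 0 2 1 2)).add_pow']
      simp only [moyalCoeff_moyalCoeff_right α leibniz, ← Nat.cast_smul_eq_nsmul K,
        LinearMap.sum_apply, LinearMap.smul_apply, map_sum, map_smul, P]

end Associative

lemma sum_antidiagonal_one_div_factorial_smul {K V : Type*} [Semifield K] [CharZero K]
    [AddCommMonoid V] [Module K V] (n : ℕ) (B : ℕ × ℕ → V) :
    ∑ p ∈ antidiagonal n, (1 / ((p.1.factorial : K) * (p.2.factorial : K))) • B p =
      (1 / (n.factorial : K)) • ∑ p ∈ antidiagonal n, n.choose p.1 • B p := by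
  rw [smul_sum]
  refine sum_congr rfl fun p hp => ?_
  obtain rfl := mem_antidiagonal.mp hp
  have factorial_ne_zero : ((p.1 + p.2).factorial : K) ≠ 0 :=
    Nat.cast_ne_zero.mpr (Nat.factorial_ne_zero _)
  rw [← Nat.cast_smul_eq_nsmul K, smul_smul, Nat.cast_add_choose, one_div_mul_eq_div,
    div_right_comm, div_self factorial_ne_zero]

theorem moyal_product_associative_general {K A ι : Type*} [Semifield K] [CharZero K]
    [NonUnitalSemiring A] [Module K A] [SMulCommClass K A A] [IsScalarTower K A A] [Fintype ι]
    (α : ι × ι → K) {E : ι → Module.End K A}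
    (hE : ∀ s t, Commute (E s) (E t)) (leibniz : ∀ s f g, E s (f * g) = E s f * g + f * E s g)
    (n : ℕ) (f g h : A) :
    ∑ p ∈ antidiagonal n, (1 / ((p.1.factorial : K) * (p.2.factorial : K))) •
        moyalCoeff α E p.1 (moyalCoeff α E p.2 f g) h =
      ∑ p ∈ antidiagonal n, (1 / ((p.1.factorial : K) * (p.2.factorial : K))) •
        moyalCoeff α E p.1 f (moyalCoeff α E p.2 g h) := by
  simp only [sum_antidiagonal_one_div_factorial_smul,
    sum_choose_smul_moyalCoeff_assoc α hE leibniz]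

section Polynomial

lemma commute_pderiv {R σ : Type*} [CommSemiring R] (s t : σ) :
    Commute (pderiv (R := R) s).toLinearMap (pderiv t).toLinearMap := by
  refine linearMap_ext fun m => LinearMap.ext_ring ?_
  obtain rfl | hst := eq_or_ne s t
  · rfl
  · simp [hst, hst.symm, tsub_right_comm, mul_comm]

variable {N : ℕ}

lemma iterDeriv_cons {k : ℕ} (s : Fin N) (i : Fin k → Fin N) (f : MvPolynomial (Fin N) ℝ) :
    iterDeriv (Fin.cons s i : Fin (k + 1) → Fin N) f = iterDeriv i (pderiv s f) := by
  simp only [iterDeriv, List.ofFn_succ, Fin.cons_zero, Fin.cons_succ, List.foldl_cons]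

lemma sum_fun_fin_succ {ι M : Type*} [Fintype ι] [AddCommMonoid M] {k : ℕ}
    (F : (Fin (k + 1) → ι) → M) :
    ∑ i, F i = ∑ s, ∑ i : Fin k → ι, F (Fin.cons s i) := by
  rw [← (Fin.consEquiv fun _ : Fin (k + 1) => ι).sum_comp, Fintype.sum_prod_type]
  rfl

variable (α : Fin N × Fin N → ℝ)

lemma moyalB_zero (f g : MvPolynomial (Fin N) ℝ) : moyalB α 0 f g = f * g := by
  simp [moyalB, iterDeriv]

lemma moyalB_succ (k : ℕ) (f g : MvPolynomial (Fin N) ℝ) :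
    moyalB α (k + 1) f g = ∑ s, ∑ t, α (s, t) • moyalB α k (pderiv s f) (pderiv t g) := by
  simp only [moyalB, sum_fun_fin_succ, iterDeriv_cons, Fin.prod_univ_succ, Fin.cons_zero,
    Fin.cons_succ, smul_sum, smul_smul]
  exact sum_congr rfl fun s _ => sum_comm

lemma moyalB_eq_moyalCoeff (k : ℕ) (f g : MvPolynomial (Fin N) ℝ) :
    moyalB α k f g = moyalCoeff α (fun s => (pderiv s).toLinearMap) k f g := by
  induction k generalizing f g with
  | zero => rw [moyalB_zero, moyalCoeff_zero]
  | succ k ih => simp only [moyalB_succ, moyalCoeff_succ, ih, Derivation.coeFn_coe]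

end Polynomial

/-- The Moyal-type product `f ⋆ g = ∑_{k≥0} (ħ^k/k!) B_k(f,g)` on `ℝ[x₁,…,x_N]⟦ħ⟧` associated
to a constant matrix `α` is associative, order by order in `ħ`: for every `n ≥ 0`,
`∑_{a+b=n} (1/(a!b!)) B_a(B_b(f,g),h) = ∑_{a+b=n} (1/(a!b!)) B_a(f,B_b(g,h))`. -/
theorem moyal_product_associative {N : ℕ} (hN : 1 ≤ N) (α : Fin N × Fin N → ℝ) :
    ∀ n : ℕ, ∀ f g h : MvPolynomial (Fin N) ℝ,
      ∑ p ∈ antidiagonal n,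
          (1 / ((p.1.factorial : ℝ) * (p.2.factorial : ℝ))) •
            moyalB α p.1 (moyalB α p.2 f g) h
        = ∑ p ∈ antidiagonal n,
            (1 / ((p.1.factorial : ℝ) * (p.2.factorial : ℝ))) •
              moyalB α p.1 f (moyalB α p.2 g h) := by
  simpa only [moyalB_eq_moyalCoeff] using
    moyal_product_associative_general α commute_pderiv fun _ _ _ => pderiv_mul
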